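/- arXiv:2206.06232 — 2 statements merged into one kernel-verified Lean document; each statement's English description precedes it below -/
import Mathlib

section
/- Let L : ℝ^d → ℝ be differentiable, convex, and β-smooth with β > 0, and let w* be a global minimizer of L with L* = L(w*). Let γ > 0 and ρ > 0 satisfy γβ(1 + ρβ) < 2, and define the full-batch SAM iterates w_{t+1} = w_t − γ∇L(w_t + ρ∇L(w_t)) from any w_0 ∈ ℝ^d. Then for every T ≥ 1, with w̄_T = (1/T)∑_{t=0}^{T−1} w_t, one has L(w̄_T) − L* ≤ (2ρβ + 1)·‖w_0 − w*‖² / (γ·(2 − γβ(1 + ρβ))·T). -/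
open scoped RealInnerProductSpace

/-!
Write `y = w + ρ∇L(w)` for the ascent point and `w⁺ = w − γ∇L(y)` for the new iterate. In the
potential `V(w) = ‖w − w*‖² + 2ρ(L(w) − L*)`, the terms `⟨∇L(y), w − w*⟩` coming from the distance
and `ρ⟨∇L(y), ∇L(w)⟩` coming from the descent lemma add up to `⟨∇L(y), y − w*⟩`, so that a SAM step
can be analysed like a gradient step taken at `y`. Cocoercivity of the gradient then gives
`V(w) − V(w⁺) ≥ γ(2 − γβ(1 + ρβ))(L(y) − L*)`, and `L(y) ≥ L(w)` by convexity. Telescoping and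
Jensen's inequality conclude.
-/

section LyapunovAverage

variable {𝕜 E : Type*} [Field 𝕜] [LinearOrder 𝕜] [IsStrictOrderedRing 𝕜]
  [AddCommGroup E] [Module 𝕜 E] {s : Set E} {f : E → 𝕜} {w : ℕ → E} {T : ℕ}

theorem map_average_le_of_convexOn (hf : ConvexOn 𝕜 s f) (hT : T ≠ 0) (hw : ∀ t < T, w t ∈ s) :
    f ((1 / (T : 𝕜)) • ∑ t ∈ Finset.range T, w t) ≤
      1 / (T : 𝕜) * ∑ t ∈ Finset.range T, f (w t) := by
  rw [Finset.smul_sum, Finset.mul_sum]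
  exact hf.map_sum_le (fun _ _ ↦ by positivity) (by simp [hT])
    fun t ht ↦ hw t (Finset.mem_range.1 ht)

theorem map_average_sub_le_of_lyapunov (hf : ConvexOn 𝕜 s f) (hT : T ≠ 0)
    (hw : ∀ t < T, w t ∈ s) {V : ℕ → 𝕜} {c m : 𝕜} (hc : 0 < c)
    (hV : ∀ t < T, c * (f (w t) - m) ≤ V t - V (t + 1)) (hVT : 0 ≤ V T) :
    f ((1 / (T : 𝕜)) • ∑ t ∈ Finset.range T, w t) - m ≤ V 0 / (c * T) := by
  have : (0 : 𝕜) < T := by positivity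
  have telescope : c * (∑ t ∈ Finset.range T, f (w t) - T * m) ≤ V 0 := calc
    c * (∑ t ∈ Finset.range T, f (w t) - T * m)
        = ∑ t ∈ Finset.range T, c * (f (w t) - m) := by
      simp [← Finset.mul_sum, Finset.sum_sub_distrib]
    _ ≤ ∑ t ∈ Finset.range T, (V t - V (t + 1)) :=
      Finset.sum_le_sum fun t ht ↦ hV t (Finset.mem_range.1 ht)
    _ = V 0 - V T := Finset.sum_range_sub' V T
    _ ≤ V 0 := sub_le_self _ hVT
  rw [le_div_iff₀ (by positivity)]
  calc (f ((1 / (T : 𝕜)) • ∑ t ∈ Finset.range T, w t) - m) * (c * T)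
      ≤ (1 / (T : 𝕜) * ∑ t ∈ Finset.range T, f (w t) - m) * (c * T) := by
        gcongr
        exact map_average_le_of_convexOn hf hT hw
    _ = c * (∑ t ∈ Finset.range T, f (w t) - T * m) := by field_simp
    _ ≤ V 0 := telescope

end LyapunovAverage

section SmoothConvex

variable {E : Type*} [NormedAddCommGroup E] [InnerProductSpace ℝ E] [CompleteSpace E]
  {f : E → ℝ}

theorem eq_zero_of_isLocalMin_of_hasGradientAt {f' x : E} (hmin : IsLocalMin f x)
    (hf : HasGradientAt f f' x) : f' = 0 := by
  simpa using hmin.hasFDerivAt_eq_zero hf.hasFDerivAt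

theorem hasDerivAt_comp_lineMap_of_hasGradientAt {f' x y : E} {t : ℝ}
    (hf : HasGradientAt f f' (AffineMap.lineMap x y t)) :
    HasDerivAt (fun t : ℝ ↦ f (AffineMap.lineMap x y t)) ⟪f', y - x⟫ t :=
  hf.hasFDerivAt.comp_hasDerivAt t AffineMap.hasDerivAt_lineMap

theorem add_inner_sub_le_of_convexOn_of_hasGradientAt {s : Set E} {f' x y : E}
    (hconv : ConvexOn ℝ s f) (hx : x ∈ s) (hy : y ∈ s) (hf : HasGradientAt f f' x) :
    f x + ⟪f', y - x⟫ ≤ f y := by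
  have hderiv : HasDerivAt (f ∘ AffineMap.lineMap x y) ⟪f', y - x⟫ (0 : ℝ) :=
    hasDerivAt_comp_lineMap_of_hasGradientAt (by simpa using hf)
  have hslope := (hconv.comp_affineMap (AffineMap.lineMap x y)).le_slope_of_hasDerivAt
    (x := 0) (y := 1) (by simpa using hx) (by simpa using hy) one_pos hderiv
  have : ⟪f', y - x⟫ ≤ f y - f x := by simpa [slope_def_field] using hslope
  linarith

theorem le_map_add_smul_gradient_of_convexOn {s : Set E} {f' x : E} {ρ : ℝ}
    (hconv : ConvexOn ℝ s f) (hx : x ∈ s) (hy : x + ρ • f' ∈ s) (hf : HasGradientAt f f' x)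
    (hρ : 0 ≤ ρ) : f x ≤ f (x + ρ • f') := by
  have tangent := add_inner_sub_le_of_convexOn_of_hasGradientAt hconv hx hy hf
  rw [add_sub_cancel_left, real_inner_smul_right] at tangent
  have : 0 ≤ ρ * ⟪f', f'⟫ := mul_nonneg hρ real_inner_self_nonneg
  linarith

variable {f' : E → E} {β : NNReal}

theorem le_add_inner_sub_add_of_lipschitzWith (hf : ∀ x, HasGradientAt f (f' x) x)
    (hLip : LipschitzWith β f') (x y : E) :
    f y ≤ f x + ⟪f' x, y - x⟫ + β / 2 * ‖y - x‖ ^ 2 := by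
  have hderiv (t : ℝ) : HasDerivAt (fun t : ℝ ↦ f (AffineMap.lineMap x y t))
      ⟪f' (AffineMap.lineMap x y t), y - x⟫ t :=
    hasDerivAt_comp_lineMap_of_hasGradientAt (hf _)
  have hderiv_quadratic (t : ℝ) :
      HasDerivAt (fun t : ℝ ↦ f x + t * ⟪f' x, y - x⟫ + β / 2 * ‖y - x‖ ^ 2 * t ^ 2)
        (⟪f' x, y - x⟫ + β * ‖y - x‖ ^ 2 * t) t := by
    refine ((((hasDerivAt_id t).mul_const _).const_add _).add
      ((hasDerivAt_pow 2 t).const_mul _)).congr_deriv ?_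
    push_cast
    ring
  have deriv_le (t : ℝ) (ht : 0 ≤ t) : ⟪f' (AffineMap.lineMap x y t), y - x⟫ ≤
      ⟪f' x, y - x⟫ + β * ‖y - x‖ ^ 2 * t := by
    rw [← sub_le_iff_le_add', ← inner_sub_left]
    calc ⟪f' (AffineMap.lineMap x y t) - f' x, y - x⟫
        ≤ ‖f' (AffineMap.lineMap x y t) - f' x‖ * ‖y - x‖ := real_inner_le_norm _ _
      _ ≤ β * ‖t • (y - x)‖ * ‖y - x‖ := by
        gcongr
        simpa [AffineMap.lineMap_apply] using hLip.norm_sub_le (AffineMap.lineMap x y t) x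
      _ = β * ‖y - x‖ ^ 2 * t := by rw [norm_smul, Real.norm_of_nonneg ht]; ring
  simpa using image_le_of_deriv_right_le_deriv_boundary
    (fun t _ ↦ (hderiv t).continuousAt.continuousWithinAt)
    (fun t _ ↦ (hderiv t).hasDerivWithinAt) (by simp)
    (fun t _ ↦ (hderiv_quadratic t).continuousAt.continuousWithinAt)
    (fun t _ ↦ (hderiv_quadratic t).hasDerivWithinAt) (fun t ht ↦ deriv_le t ht.1)
    (Set.right_mem_Icc.2 zero_le_one)

theorem add_inner_sub_add_sq_norm_sub_div_le_of_convexOn (hf : ∀ x, HasGradientAt f (f' x) x)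
    (hconv : ConvexOn ℝ Set.univ f) (hβ : 0 < β) (hLip : LipschitzWith β f') (x y : E) :
    f x + ⟪f' x, y - x⟫ + ‖f' y - f' x‖ ^ 2 / (2 * β) ≤ f y := by
  have : (0 : ℝ) < β := hβ
  -- `z` minimizes the quadratic upper bound at `y` minus the affine lower bound at `x`.
  obtain ⟨z, hz⟩ : ∃ z, z - y = -((β : ℝ)⁻¹ • (f' y - f' x)) :=
    ⟨y - (β : ℝ)⁻¹ • (f' y - f' x), sub_sub_cancel_left _ _⟩
  have lower : f x + ⟪f' x, z - x⟫ ≤ f z :=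
    add_inner_sub_le_of_convexOn_of_hasGradientAt hconv trivial trivial (hf x)
  have upper : f z ≤ f y + ⟪f' y, z - y⟫ + β / 2 * ‖z - y‖ ^ 2 :=
    le_add_inner_sub_add_of_lipschitzWith hf hLip y z
  have split : ⟪f' x, z - x⟫ = ⟪f' x, y - x⟫ + ⟪f' x, z - y⟫ := by
    rw [← inner_add_right, add_comm, sub_add_sub_cancel]
  have gain : ⟪f' x, z - y⟫ - ⟪f' y, z - y⟫ - β / 2 * ‖z - y‖ ^ 2 =
      ‖f' y - f' x‖ ^ 2 / (2 * β) := by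
    rw [← neg_sub ⟪f' y, z - y⟫, ← inner_sub_left, hz, inner_neg_right, real_inner_smul_right,
      real_inner_self_eq_norm_sq, norm_neg, norm_smul, Real.norm_of_nonneg (by positivity)]
    field_simp
    ring
  linarith

end SmoothConvex

section SAM

/-- One full-batch SAM step with step size `γ` and ascent radius `ρ`, for a loss whose gradient
at `v` is `g v`. -/
def samStep {E : Type*} [AddCommGroup E] [Module ℝ E] (g : E → E) (γ ρ : ℝ) (w : E) : E :=
  w - γ • g (w + ρ • g w)

/-- The Lyapunov function of SAM with ascent radius `ρ` for the loss `L`, relative to a reference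
point `wstar`, which is a minimizer of `L` in the convergence proof. -/
def samPotential {E : Type*} [NormedAddCommGroup E] (L : E → ℝ) (wstar : E) (ρ : ℝ) (w : E) : ℝ :=
  ‖w - wstar‖ ^ 2 + 2 * ρ * (L w - L wstar)

theorem samPotential_nonneg {E : Type*} [NormedAddCommGroup E] {L : E → ℝ} {wstar : E} {ρ : ℝ}
    (hmin : ∀ v, L wstar ≤ L v) (hρ : 0 ≤ ρ) (w : E) : 0 ≤ samPotential L wstar ρ w := by
  have := sub_nonneg.2 (hmin w)
  unfold samPotential
  positivity

variable {E : Type*} [NormedAddCommGroup E] [InnerProductSpace ℝ E] [CompleteSpace E]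
  {L : E → ℝ} {g : E → E} {wstar : E} {β : NNReal} {γ ρ : ℝ}

theorem samPotential_le (hg : ∀ x, HasGradientAt L (g x) x) (hLip : LipschitzWith β g)
    (hstat : g wstar = 0) (hρ : 0 ≤ ρ) (w : E) :
    samPotential L wstar ρ w ≤ (ρ * β + 1) * ‖w - wstar‖ ^ 2 := by
  have quadratic_growth : L w - L wstar ≤ β / 2 * ‖w - wstar‖ ^ 2 := by
    have := le_add_inner_sub_add_of_lipschitzWith hg hLip wstar w
    rw [hstat, inner_zero_left] at this
    linarith
  calc samPotential L wstar ρ w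
      ≤ ‖w - wstar‖ ^ 2 + 2 * ρ * (β / 2 * ‖w - wstar‖ ^ 2) := by unfold samPotential; gcongr
    _ = (ρ * β + 1) * ‖w - wstar‖ ^ 2 := by ring

theorem samPotential_samStep_le (hg : ∀ x, HasGradientAt L (g x) x) (hLip : LipschitzWith β g)
    (hρ : 0 ≤ ρ) (w : E) :
    samPotential L wstar ρ (samStep g γ ρ w) ≤ samPotential L wstar ρ w
      - 2 * γ * ⟪g (w + ρ • g w), w + ρ • g w - wstar⟫
      + γ ^ 2 * (1 + ρ * β) * ‖g (w + ρ • g w)‖ ^ 2 := by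
  set y := w + ρ • g w with hy
  have hstep : samStep g γ ρ w = w - γ • g y := rfl
  have distance : ‖samStep g γ ρ w - wstar‖ ^ 2 =
      ‖w - wstar‖ ^ 2 - 2 * γ * ⟪g y, w - wstar⟫ + γ ^ 2 * ‖g y‖ ^ 2 := by
    rw [hstep, sub_right_comm, norm_sub_sq_real, real_inner_smul_right, norm_smul, mul_pow,
      Real.norm_eq_abs, sq_abs, real_inner_comm]
    ring
  have loss : L (samStep g γ ρ w) - L w ≤
      -(γ * ⟪g y, g w⟫) + β / 2 * (γ ^ 2 * ‖g y‖ ^ 2) := by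
    have := le_add_inner_sub_add_of_lipschitzWith hg hLip w (samStep g γ ρ w)
    rw [hstep, sub_sub_cancel_left, inner_neg_right, real_inner_smul_right, norm_neg, norm_smul,
      mul_pow, Real.norm_eq_abs, sq_abs, real_inner_comm] at this
    rw [hstep]
    linarith
  have ascent : ⟪g y, y - wstar⟫ = ⟪g y, w - wstar⟫ + ρ * ⟪g y, g w⟫ := by
    rw [← real_inner_smul_right, ← inner_add_right, hy, add_sub_right_comm]
  have := mul_le_mul_of_nonneg_left loss (mul_nonneg zero_le_two hρ)
  rw [samPotential, samPotential, distance, ascent]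
  linarith

theorem mul_ascent_sub_le_samPotential_sub_samStep (hg : ∀ x, HasGradientAt L (g x) x)
    (hconv : ConvexOn ℝ Set.univ L) (hβ : 0 < β) (hLip : LipschitzWith β g)
    (hstat : g wstar = 0) (hγ : 0 ≤ γ) (hρ : 0 ≤ ρ) (hstep : γ * β * (1 + ρ * β) ≤ 2) (w : E) :
    γ * (2 - γ * β * (1 + ρ * β)) * (L (w + ρ • g w) - L wstar) ≤
      samPotential L wstar ρ w - samPotential L wstar ρ (samStep g γ ρ w) := by
  have : (0 : ℝ) < β := hβ
  have potential_drop := samPotential_samStep_le (γ := γ) (wstar := wstar) hg hLip hρ w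
  set y := w + ρ • g w
  set q := γ * β * (1 + ρ * β) with hq
  set κ := ‖g y‖ ^ 2 / (2 * β) with hκ
  have gradient_le_gap : κ ≤ L y - L wstar := by
    have := add_inner_sub_add_sq_norm_sub_div_le_of_convexOn hg hconv hβ hLip wstar y
    rw [hstat, inner_zero_left, sub_zero] at this
    linarith
  have gap_le_inner : L y - L wstar + κ ≤ ⟪g y, y - wstar⟫ := by
    have := add_inner_sub_add_sq_norm_sub_div_le_of_convexOn hg hconv hβ hLip y wstar
    rw [hstat, zero_sub, norm_neg, ← neg_sub y, inner_neg_right] at this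
    linarith
  have step_cost : γ ^ 2 * (1 + ρ * β) * ‖g y‖ ^ 2 = 2 * γ * (q * κ) := by
    rw [hq, hκ]
    field_simp
  have slack : 0 ≤ q * (L y - L wstar - κ) + (2 - q) * κ := by
    have := sub_nonneg.2 gradient_le_gap
    have := sub_nonneg.2 hstep
    positivity
  calc γ * (2 - q) * (L y - L wstar)
      ≤ γ * (2 - q) * (L y - L wstar) + γ * (q * (L y - L wstar - κ) + (2 - q) * κ) :=
        le_add_of_nonneg_right (mul_nonneg hγ slack)
    _ = 2 * γ * (L y - L wstar + κ) - 2 * γ * (q * κ) := by ring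
    _ ≤ 2 * γ * ⟪g y, y - wstar⟫ - γ ^ 2 * (1 + ρ * β) * ‖g y‖ ^ 2 := by rw [step_cost]; gcongr
    _ ≤ samPotential L wstar ρ w - samPotential L wstar ρ (samStep g γ ρ w) := by linarith

theorem mul_sub_le_samPotential_sub_samStep (hg : ∀ x, HasGradientAt L (g x) x)
    (hconv : ConvexOn ℝ Set.univ L) (hβ : 0 < β) (hLip : LipschitzWith β g)
    (hstat : g wstar = 0) (hγ : 0 ≤ γ) (hρ : 0 ≤ ρ) (hstep : γ * β * (1 + ρ * β) ≤ 2) (w : E) :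
    γ * (2 - γ * β * (1 + ρ * β)) * (L w - L wstar) ≤
      samPotential L wstar ρ w - samPotential L wstar ρ (samStep g γ ρ w) := calc
  γ * (2 - γ * β * (1 + ρ * β)) * (L w - L wstar)
      ≤ γ * (2 - γ * β * (1 + ρ * β)) * (L (w + ρ • g w) - L wstar) := by
    have := sub_nonneg.2 hstep
    gcongr
    exact le_map_add_smul_gradient_of_convexOn hconv trivial trivial (hg w) hρ
  _ ≤ samPotential L wstar ρ w - samPotential L wstar ρ (samStep g γ ρ w) :=
    mul_ascent_sub_le_samPotential_sub_samStep hg hconv hβ hLip hstat hγ hρ hstep w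

theorem sam_fullbatch_convergence_convex_general (hg : ∀ x, HasGradientAt L (g x) x)
    (hconv : ConvexOn ℝ Set.univ L) (hβ : 0 < β) (hLip : LipschitzWith β g)
    (hmin : ∀ v, L wstar ≤ L v) (hγ : 0 < γ) (hρ : 0 ≤ ρ) (hstep : γ * β * (1 + ρ * β) < 2)
    {w : ℕ → E} (hrec : ∀ t, w (t + 1) = samStep g γ ρ (w t)) {T : ℕ} (hT : T ≠ 0) :
    L ((1 / (T : ℝ)) • ∑ t ∈ Finset.range T, w t) - L wstar ≤
      (ρ * β + 1) * ‖w 0 - wstar‖ ^ 2 / (γ * (2 - γ * β * (1 + ρ * β)) * T) := by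
  have hstat : g wstar = 0 :=
    eq_zero_of_isLocalMin_of_hasGradientAt (.of_forall hmin) (hg wstar)
  have hrate : 0 < γ * (2 - γ * β * (1 + ρ * β)) := mul_pos hγ (sub_pos.2 hstep)
  have descent (t : ℕ) : γ * (2 - γ * β * (1 + ρ * β)) * (L (w t) - L wstar) ≤
      samPotential L wstar ρ (w t) - samPotential L wstar ρ (w (t + 1)) := by
    rw [hrec]
    exact mul_sub_le_samPotential_sub_samStep hg hconv hβ hLip hstat hγ.le hρ hstep.le (w t)
  calc L ((1 / (T : ℝ)) • ∑ t ∈ Finset.range T, w t) - L wstar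
      ≤ samPotential L wstar ρ (w 0) / (γ * (2 - γ * β * (1 + ρ * β)) * T) :=
        map_average_sub_le_of_lyapunov (V := fun t ↦ samPotential L wstar ρ (w t)) hconv hT
          (fun _ _ ↦ trivial) hrate (fun t _ ↦ descent t) (samPotential_nonneg hmin hρ (w T))
    _ ≤ (ρ * β + 1) * ‖w 0 - wstar‖ ^ 2 / (γ * (2 - γ * β * (1 + ρ * β)) * T) := by
        gcongr
        exact samPotential_le hg hLip hstat hρ (w 0)

end SAM

/-- Convergence of full-batch SAM for convex `β`-smooth functions:
with a global minimizer `w*`, step sizes `γ, ρ > 0` with `γβ(1 + ρβ) < 2`, and iterates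
`w_{t+1} = w_t − γ∇L(w_t + ρ∇L(w_t))`, for every `T ≥ 1` the averaged iterate
`w̄_T = (1/T)∑_{t<T} w_t` satisfies
`L(w̄_T) − L* ≤ (2ρβ + 1)‖w_0 − w*‖² / (γ(2 − γβ(1 + ρβ))T)`. -/
theorem sam_fullbatch_convergence_convex {d : ℕ}
    (L : EuclideanSpace ℝ (Fin d) → ℝ)
    (g : EuclideanSpace ℝ (Fin d) → EuclideanSpace ℝ (Fin d))
    (hg : ∀ x, HasGradientAt L (g x) x)
    (hconv : ConvexOn ℝ Set.univ L)
    (β : ℝ) (hβ : 0 < β) (hLip : LipschitzWith β.toNNReal g)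
    (wstar : EuclideanSpace ℝ (Fin d)) (hmin : ∀ v, L wstar ≤ L v)
    (γ ρ : ℝ) (hγ : 0 < γ) (hρ : 0 < ρ)
    (hstep : γ * β * (1 + ρ * β) < 2)
    (w : ℕ → EuclideanSpace ℝ (Fin d))
    (hrec : ∀ t : ℕ, w (t + 1) = w t - γ • g (w t + ρ • g (w t)))
    (T : ℕ) (hT : 1 ≤ T) :
    L ((1 / (T : ℝ)) • ∑ t ∈ Finset.range T, w t) - L wstar ≤
      (2 * ρ * β + 1) * ‖w 0 - wstar‖ ^ 2 / (γ * (2 - γ * β * (1 + ρ * β)) * T) := by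
  lift β to NNReal using hβ.le
  rw [Real.toNNReal_coe] at hLip
  have sharp := sam_fullbatch_convergence_convex_general hg hconv hβ hLip hmin hγ hρ.le hstep
    hrec (Nat.one_le_iff_ne_zero.1 hT)
  have := sub_pos.2 hstep
  exact sharp.trans (by gcongr; linarith [mul_pos hρ hβ])
end

section
/- Assume each ℓ_i is differentiable, ∇L is β-Lipschitz with β > 0, L is bounded below with infimum L*, and (A1) holds with constant σ ≥ 0. Fix a batch size b ≥ 1, a horizon T ≥ 16, and step sizes γ = 1/(√T·β), ρ = 1/(T^{1/4}·β). From any w_0, define for each sequence of batch pairs ((I_0,J_0),…,(I_{T−1},J_{T−1})) the stochastic n-SAM iterates w_{t+1} = w_t − γ∇L_{I_t}(w_t + ρ∇L_{J_t}(w_t)). Then, averaging uniformly over all such batch-pair sequences, (1/T)·E[∑_{t=0}^{T−1} ‖∇L(w_t)‖²] ≤ (4β/√T)·(L(w_0) − L*) + 8σ²/(b√T). -/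
open scoped RealInnerProductSpace

/-- The full (training) loss `L(w) = (1/n) ∑ᵢ ℓᵢ(w)`. -/
noncomputable def fullLoss {d n : ℕ} (ℓ : Fin n → EuclideanSpace ℝ (Fin d) → ℝ)
    (w : EuclideanSpace ℝ (Fin d)) : ℝ :=
  (n : ℝ)⁻¹ * ∑ i, ℓ i w

/-- The full gradient `∇L(w) = (1/n) ∑ᵢ ∇ℓᵢ(w)` (given per-example gradients `g i`). -/
noncomputable def fullGrad {d n : ℕ}
    (g : Fin n → EuclideanSpace ℝ (Fin d) → EuclideanSpace ℝ (Fin d))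
    (w : EuclideanSpace ℝ (Fin d)) : EuclideanSpace ℝ (Fin d) :=
  (n : ℝ)⁻¹ • ∑ i, g i w

/-- The mini-batch gradient `∇L_J(w) = (1/b) ∑_{k<b} ∇ℓ_{J k}(w)` for a batch
`J : Fin b → Fin n` (sampling with replacement). -/
noncomputable def batchGrad {d n b : ℕ}
    (g : Fin n → EuclideanSpace ℝ (Fin d) → EuclideanSpace ℝ (Fin d))
    (J : Fin b → Fin n) (w : EuclideanSpace ℝ (Fin d)) : EuclideanSpace ℝ (Fin d) :=
  (b : ℝ)⁻¹ • ∑ k, g (J k) w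


/-!
Conditionally on the ascent batch, one n-SAM update is a stochastic gradient step whose gradient is
evaluated at `y = x + ρ ∇L_J(x)` instead of `x`. The descent lemma bounds its effect by
`-γ ⟪∇L x, ∇L y⟫ + (β γ² / 2) ‖∇L y‖²` plus variance, and for `β γ ≤ 1` this is at most
`(γ / 2) (‖∇L y - ∇L x‖² - ‖∇L x‖²)`, where smoothness gives
`‖∇L y - ∇L x‖ ≤ β ρ ‖∇L_J(x)‖`. Averaging over the ascent batch thus costs only a factor
`1 - (β ρ)²` in the decrease. Since the state at time `t` does not depend on the `t`-th pair of
batches, that pair can be resampled, and the expected decreases telescope.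
-/

open scoped BigOperators NNReal

section Expectation

variable {ι M : Type*} [Fintype ι] [AddCommMonoid M] [Module ℚ≥0 M]

theorem expect_expect_update [DecidableEq ι] {α : ι → Type*} [∀ i, Fintype (α i)]
    [∀ i, Nonempty (α i)] (i : ι) (f : (∀ j, α j) → M) :
    𝔼 S, 𝔼 a : α i, f (Function.update S i a) = 𝔼 S, f S := by
  have hswap : Function.Involutive
      fun p : (∀ j, α j) × α i => (Function.update p.1 i p.2, p.1 i) := fun p => by simp
  calc 𝔼 S, 𝔼 a : α i, f (Function.update S i a)
      = 𝔼 p : (∀ j, α j) × α i, f (Function.update p.1 i p.2) :=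
        (Finset.expect_product' _ _ _).symm
    _ = 𝔼 p : (∀ j, α j) × α i, f p.1 :=
        Fintype.expect_equiv hswap.toPerm _ _ fun _ => rfl
    _ = 𝔼 S, 𝔼 _a : α i, f S := Finset.expect_product' _ _ fun S _ => f S
    _ = 𝔼 S, f S := by simp only [Fintype.expect_const]

theorem expect_comp_eval {α : ι → Type*} [DecidableEq ι] [∀ i, Fintype (α i)]
    [∀ i, Nonempty (α i)] (i : ι) (f : α i → M) : 𝔼 S : ∀ j, α j, f (S i) = 𝔼 a, f a := by
  rw [← expect_expect_update i]
  simp only [Function.update_self, Fintype.expect_const]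

theorem inv_card_smul_sum_eq_expect {E : Type*} [AddCommGroup E] [Module ℝ E] [Module ℚ≥0 E]
    (f : ι → E) : (Fintype.card ι : ℝ)⁻¹ • ∑ i, f i = 𝔼 i, f i := by
  rw [Finset.expect_univ, inv_natCast_smul_eq ℝ ℚ≥0]

end Expectation

/-- `W S` is the trajectory of the recursion `x ↦ step a x` started at `x₀` and driven by the
samples `a = S 0, …, S (T - 1)`. Nothing is required of `W S t` for `t > T`. -/
structure IsDrivenRecursion {A 𝒳 : Type*} {T : ℕ} (step : A → 𝒳 → 𝒳) (x₀ : 𝒳)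
    (W : (Fin T → A) → ℕ → 𝒳) : Prop where
  zero : ∀ S, W S 0 = x₀
  succ : ∀ S (t : Fin T), W S (t + 1) = step (S t) (W S t)

namespace IsDrivenRecursion

variable {A 𝒳 : Type*} {T : ℕ} {step : A → 𝒳 → 𝒳} {x₀ : 𝒳} {W : (Fin T → A) → ℕ → 𝒳}

theorem update_eq (hW : IsDrivenRecursion step x₀ W) (S : Fin T → A) (t : Fin T) (a : A) {k : ℕ}
    (hk : k ≤ t) : W (Function.update S t a) k = W S k := by
  induction k with
  | zero => rw [hW.zero, hW.zero]
  | succ k ih =>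
    have hne : (⟨k, by omega⟩ : Fin T) ≠ t := Fin.ne_of_lt hk
    have hupdate := hW.succ (Function.update S t a) ⟨k, by omega⟩
    rw [Function.update_of_ne hne, ih (by omega)] at hupdate
    exact hupdate.trans (hW.succ S ⟨k, by omega⟩).symm

variable [Fintype A] [Nonempty A]

theorem expect_comp_succ {M : Type*} [AddCommMonoid M] [Module ℚ≥0 M]
    (hW : IsDrivenRecursion step x₀ W) (F : 𝒳 → M) (t : Fin T) :
    𝔼 S, F (W S (t + 1)) = 𝔼 S, 𝔼 a, F (step a (W S t)) := by
  rw [← expect_expect_update t]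
  simp only [hW.succ, Function.update_self, hW.update_eq _ _ _ le_rfl]

theorem expect_add_expect_sum_le (hW : IsDrivenRecursion step x₀ W) {F q : 𝒳 → ℝ}
    (hdrift : ∀ x, 𝔼 a, F (step a x) ≤ F x - q x) {k : ℕ} (hk : k ≤ T) :
    𝔼 S, F (W S k) + 𝔼 S, ∑ t ∈ Finset.range k, q (W S t) ≤ F x₀ := by
  induction k with
  | zero => simp [hW.zero]
  | succ k ih =>
    have hstep : 𝔼 S, F (W S (k + 1)) ≤ 𝔼 S, F (W S k) - 𝔼 S, q (W S k) := by
      rw [hW.expect_comp_succ F ⟨k, hk⟩, ← Finset.expect_sub_distrib]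
      exact Finset.expect_le_expect fun S _ => hdrift (W S k)
    simp only [Finset.sum_range_succ, Finset.expect_add_distrib]
    linarith [ih (by omega)]

end IsDrivenRecursion

section SecondMoment

variable {ι Ω E : Type*} [Fintype ι] [Fintype Ω] [NormedAddCommGroup E] [InnerProductSpace ℝ E]
  [Module ℚ≥0 E]

theorem inner_expect (x : E) (f : Ω → E) : ⟪x, 𝔼 a, f a⟫ = 𝔼 a, ⟪x, f a⟫ :=
by
  rw [Finset.expect_univ, Finset.expect_univ, ← inner_sum]
  exact map_nnrat_smul (innerSL ℝ x) _ _

theorem expect_inner (f : Ω → E) (x : E) : ⟪𝔼 a, f a, x⟫ = 𝔼 a, ⟪f a, x⟫ := by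
  simp only [real_inner_comm x, inner_expect]

theorem expect_norm_sq_eq_norm_sq_add [Nonempty Ω] {X : Ω → E} {m : E} (hX : 𝔼 a, X a = m) :
    𝔼 a, ‖X a‖ ^ 2 = ‖m‖ ^ 2 + 𝔼 a, ‖X a - m‖ ^ 2 := by
  have hexpand : ∀ a, ‖X a‖ ^ 2 = 2 * ⟪m, X a⟫ - ‖m‖ ^ 2 + ‖X a - m‖ ^ 2 := fun a => by
    rw [norm_sub_sq_real, real_inner_comm]; ring
  simp only [hexpand, Finset.expect_add_distrib, Finset.expect_sub_distrib, Fintype.expect_const,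
    ← Finset.mul_expect, ← inner_expect, hX, real_inner_self_eq_norm_sq]
  ring

theorem expect_inner_eval_eq_zero [DecidableEq ι] [Nonempty Ω] {u : Ω → E} (hu : 𝔼 a, u a = 0)
    {k l : ι} (hkl : k ≠ l) : 𝔼 J : ι → Ω, ⟪u (J k), u (J l)⟫ = 0 := by
  rw [← expect_expect_update l]
  simp only [Function.update_self, Function.update_of_ne hkl, ← inner_expect, hu,
    inner_zero_right, Finset.expect_const_zero]

theorem expect_norm_expect_eval_sq [DecidableEq ι] [Nonempty ι] [Nonempty Ω] {u : Ω → E}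
    (hu : 𝔼 a, u a = 0) :
    𝔼 J : ι → Ω, ‖𝔼 k, u (J k)‖ ^ 2 = (𝔼 a, ‖u a‖ ^ 2) / Fintype.card ι := by
  have hcov : ∀ k l, 𝔼 J : ι → Ω, ⟪u (J k), u (J l)⟫ = if k = l then 𝔼 a, ‖u a‖ ^ 2 else 0 := by
    intro k l
    split_ifs with hkl
    · subst hkl
      simp only [real_inner_self_eq_norm_sq]
      exact expect_comp_eval (α := fun _ => Ω) k fun a => ‖u a‖ ^ 2
    · exact expect_inner_eval_eq_zero hu hkl
  calc 𝔼 J : ι → Ω, ‖𝔼 k, u (J k)‖ ^ 2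
      = 𝔼 J : ι → Ω, 𝔼 k, 𝔼 l, ⟪u (J k), u (J l)⟫ := by
        refine Finset.expect_congr rfl fun J _ => ?_
        rw [← real_inner_self_eq_norm_sq, expect_inner]
        simp only [inner_expect]
    _ = 𝔼 k, 𝔼 l, 𝔼 J : ι → Ω, ⟪u (J k), u (J l)⟫ := by
        rw [Finset.expect_comm]
        exact Finset.expect_congr rfl fun k _ => Finset.expect_comm _ _ _
    _ = (𝔼 a, ‖u a‖ ^ 2) / Fintype.card ι := by
        simp only [hcov, Fintype.expect_ite_eq, Fintype.expect_const]
        simp [NNRat.smul_def, div_eq_inv_mul]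

end SecondMoment

/-- `X a x`, for a uniformly random sample `a : Ω`, is an unbiased estimator of `G x` whose
variance is at most `v`, at every point `x`. -/
structure IsUnbiasedOracle {Ω E : Type*} [Fintype Ω] [NormedAddCommGroup E] [Module ℚ≥0 E]
    (X : Ω → E → E) (G : E → E) (v : ℝ) : Prop where
  expect_eq : ∀ x, 𝔼 a, X a x = G x
  expect_norm_sub_sq_le : ∀ x, 𝔼 a, ‖X a x - G x‖ ^ 2 ≤ v

namespace IsUnbiasedOracle

variable {Ω E : Type*} [Fintype Ω] [Nonempty Ω] [NormedAddCommGroup E] [Module ℚ≥0 E]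
  {X : Ω → E → E} {G : E → E} {v : ℝ}

variable [InnerProductSpace ℝ E]

theorem expect_norm_sq_le (hX : IsUnbiasedOracle X G v) (x : E) :
    𝔼 a, ‖X a x‖ ^ 2 ≤ ‖G x‖ ^ 2 + v := by
  rw [expect_norm_sq_eq_norm_sq_add (hX.expect_eq x)]
  gcongr
  exact hX.expect_norm_sub_sq_le x

theorem minibatch {κ : Type*} [Fintype κ] [Nonempty κ] [DecidableEq κ]
    (hX : IsUnbiasedOracle X G v) :
    IsUnbiasedOracle (fun (J : κ → Ω) x => 𝔼 k, X (J k) x) G (v / Fintype.card κ) where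
  expect_eq x := by
    rw [Finset.expect_comm]
    simp only [expect_comp_eval (α := fun _ => Ω) _ fun a => X a x, hX.expect_eq,
      Fintype.expect_const]
  expect_norm_sub_sq_le x := by
    have hcentered : 𝔼 a, (X a x - G x) = 0 := by
      rw [Finset.expect_sub_distrib, hX.expect_eq, Fintype.expect_const, sub_self]
    have hsub : ∀ J : κ → Ω, 𝔼 k, X (J k) x - G x = 𝔼 k, (X (J k) x - G x) := fun J => by
      rw [Finset.expect_sub_distrib, Fintype.expect_const]
    simp only [hsub]
    rw [expect_norm_expect_eval_sq hcentered]
    gcongr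
    exact hX.expect_norm_sub_sq_le x

end IsUnbiasedOracle

/-- One update of stochastic n-SAM (sharpness-aware minimisation with an unnormalised ascent
step). The pair `B` holds the sample of the descent step and then that of the ascent step. -/
def nsamStep {Ω E : Type*} [AddCommGroup E] [Module ℝ E] (X : Ω → E → E) (γ ρ : ℝ)
    (B : Ω × Ω) (x : E) : E :=
  x - γ • X B.1 (x + ρ • X B.2 x)

theorem rpow_one_div_four_sq {x : ℝ} (hx : 0 ≤ x) : (x ^ ((1 : ℝ) / 4)) ^ 2 = √x := by
  rw [← Real.rpow_mul_natCast hx, Real.sqrt_eq_rpow]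
  norm_num

section Smooth

variable {E : Type*} [NormedAddCommGroup E] [InnerProductSpace ℝ E] [CompleteSpace E]
  {f : E → ℝ} {G : E → E} {β : ℝ≥0}

theorem le_add_inner_add_norm_sq_of_lipschitzWith_gradient (hf : ∀ x, HasGradientAt f (G x) x)
    (hG : LipschitzWith β G) (x v : E) : f (x + v) ≤ f x + ⟪G x, v⟫ + β / 2 * ‖v‖ ^ 2 := by
  have hline : ∀ t : ℝ, HasDerivAt (fun t : ℝ => f (x + t • v)) ⟪G (x + t • v), v⟫ t := by
    intro t
    have hsegment : HasDerivAt (fun t : ℝ => x + t • v) v t := by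
      simpa only [id_eq, one_smul] using ((hasDerivAt_id t).smul_const v).const_add x
    exact (hf (x + t • v)).hasFDerivAt.comp_hasDerivAt t hsegment
  have hquadratic : ∀ t : ℝ, HasDerivAt
      (fun t : ℝ => f x + t * ⟪G x, v⟫ + β / 2 * ‖v‖ ^ 2 * t ^ 2)
      (⟪G x, v⟫ + β * ‖v‖ ^ 2 * t) t := by
    intro t
    refine ((((hasDerivAt_id' t).mul_const ⟪G x, v⟫).const_add (f x)).fun_add
      ((hasDerivAt_pow 2 t).const_mul (β / 2 * ‖v‖ ^ 2))).congr_deriv ?_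
    push_cast
    ring
  have hslope : ∀ t : ℝ, 0 ≤ t → ⟪G (x + t • v), v⟫ ≤ ⟪G x, v⟫ + β * ‖v‖ ^ 2 * t := by
    intro t ht
    rw [← sub_le_iff_le_add', ← inner_sub_left]
    calc ⟪G (x + t • v) - G x, v⟫ ≤ ‖G (x + t • v) - G x‖ * ‖v‖ := real_inner_le_norm _ _
      _ ≤ β * ‖x + t • v - x‖ * ‖v‖ := by gcongr; exact hG.norm_sub_le _ _
      _ = β * ‖v‖ ^ 2 * t := by
        rw [add_sub_cancel_left, norm_smul, Real.norm_of_nonneg ht]; ring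
  have hle := image_le_of_deriv_right_le_deriv_boundary (a := 0) (b := 1)
    (fun t _ => (hline t).continuousAt.continuousWithinAt)
    (fun t _ => (hline t).hasDerivWithinAt) (by simp)
    (fun t _ => (hquadratic t).continuousAt.continuousWithinAt)
    (fun t _ => (hquadratic t).hasDerivWithinAt) (fun t ht => hslope t ht.1)
    (Set.right_mem_Icc.2 zero_le_one)
  simpa only [one_smul, one_mul, one_pow, mul_one] using hle

variable [Module ℚ≥0 E] {Ω : Type*} [Fintype Ω] [Nonempty Ω] {X : Ω → E → E} {v : ℝ}

theorem IsUnbiasedOracle.expect_comp_sub_smul_le (hX : IsUnbiasedOracle X G v)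
    (hf : ∀ x, HasGradientAt f (G x) x) (hG : LipschitzWith β G) (γ : ℝ) (x y : E) :
    𝔼 a, f (x - γ • X a y) ≤ f x - γ * ⟪G x, G y⟫ + β / 2 * γ ^ 2 * (‖G y‖ ^ 2 + v) := by
  have hdescent : ∀ a, f (x - γ • X a y) ≤
      f x - γ * ⟪G x, X a y⟫ + β / 2 * γ ^ 2 * ‖X a y‖ ^ 2 := by
    intro a
    have h := le_add_inner_add_norm_sq_of_lipschitzWith_gradient hf hG x (-(γ • X a y))
    rwa [← sub_eq_add_neg, inner_neg_right, real_inner_smul_right, norm_neg, norm_smul, mul_pow,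
      Real.norm_eq_abs, sq_abs, ← sub_eq_add_neg, ← mul_assoc] at h
  calc 𝔼 a, f (x - γ • X a y)
      ≤ 𝔼 a, (f x - γ * ⟪G x, X a y⟫ + β / 2 * γ ^ 2 * ‖X a y‖ ^ 2) :=
        Finset.expect_le_expect fun a _ => hdescent a
    _ = f x - γ * ⟪G x, G y⟫ + β / 2 * γ ^ 2 * 𝔼 a, ‖X a y‖ ^ 2 := by
        simp only [Finset.expect_add_distrib, Finset.expect_sub_distrib, Fintype.expect_const,
          ← Finset.mul_expect, ← inner_expect, hX.expect_eq]
    _ ≤ f x - γ * ⟪G x, G y⟫ + β / 2 * γ ^ 2 * (‖G y‖ ^ 2 + v) := by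
        gcongr
        exact hX.expect_norm_sq_le y

theorem IsUnbiasedOracle.expect_comp_sub_smul_le_of_mul_le_one (hX : IsUnbiasedOracle X G v)
    (hf : ∀ x, HasGradientAt f (G x) x) (hG : LipschitzWith β G) {γ : ℝ} (hγ : 0 ≤ γ)
    (hβγ : β * γ ≤ 1) (x y : E) :
    𝔼 a, f (x - γ • X a y) ≤
      f x - γ / 2 * ‖G x‖ ^ 2 + γ / 2 * (β * ‖y - x‖) ^ 2 + γ / 2 * (β * γ) * v := by
  have hlip : ‖G y - G x‖ ^ 2 ≤ (β * ‖y - x‖) ^ 2 := by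
    gcongr
    exact hG.norm_sub_le y x
  have hpolar : ‖G y - G x‖ ^ 2 = ‖G y‖ ^ 2 - 2 * ⟪G x, G y⟫ + ‖G x‖ ^ 2 := by
    rw [norm_sub_sq_real, real_inner_comm]
  calc 𝔼 a, f (x - γ • X a y)
      ≤ f x - γ * ⟪G x, G y⟫ + β / 2 * γ ^ 2 * (‖G y‖ ^ 2 + v) :=
        hX.expect_comp_sub_smul_le hf hG γ x y
    _ = f x - γ * ⟪G x, G y⟫ + γ / 2 * (β * γ * ‖G y‖ ^ 2) + γ / 2 * (β * γ) * v := by ring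
    _ ≤ f x - γ * ⟪G x, G y⟫ + γ / 2 * (1 * ‖G y‖ ^ 2) + γ / 2 * (β * γ) * v := by gcongr
    _ = f x - γ / 2 * ‖G x‖ ^ 2 + γ / 2 * ‖G y - G x‖ ^ 2 + γ / 2 * (β * γ) * v := by
        rw [hpolar]; ring
    _ ≤ f x - γ / 2 * ‖G x‖ ^ 2 + γ / 2 * (β * ‖y - x‖) ^ 2 + γ / 2 * (β * γ) * v := by gcongr

theorem expect_comp_nsamStep_le (hX : IsUnbiasedOracle X G v)
    (hf : ∀ x, HasGradientAt f (G x) x) (hG : LipschitzWith β G) {γ : ℝ} (hγ : 0 ≤ γ)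
    (hβγ : β * γ ≤ 1) (ρ : ℝ) (x : E) :
    𝔼 B, f (nsamStep X γ ρ B x) ≤
      f x - γ / 2 * (1 - (β * ρ) ^ 2) * ‖G x‖ ^ 2 + γ / 2 * ((β * ρ) ^ 2 + β * γ) * v := by
  have hascent : ∀ J, (β * ‖x + ρ • X J x - x‖) ^ 2 = (β * ρ) ^ 2 * ‖X J x‖ ^ 2 := fun J => by
    rw [add_sub_cancel_left, norm_smul, Real.norm_eq_abs, ← mul_assoc, mul_pow, mul_pow, sq_abs,
      ← mul_pow]
  calc 𝔼 B, f (nsamStep X γ ρ B x)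
      = 𝔼 J, 𝔼 I, f (x - γ • X I (x + ρ • X J x)) := by
        rw [Finset.expect_comm]
        exact Finset.expect_product' _ _ fun I J => f (x - γ • X I (x + ρ • X J x))
    _ ≤ 𝔼 J, (f x - γ / 2 * ‖G x‖ ^ 2 + γ / 2 * ((β * ρ) ^ 2 * ‖X J x‖ ^ 2)
          + γ / 2 * (β * γ) * v) :=
        Finset.expect_le_expect fun J _ => hascent J ▸
          hX.expect_comp_sub_smul_le_of_mul_le_one hf hG hγ hβγ x _
    _ = f x - γ / 2 * ‖G x‖ ^ 2 + γ / 2 * ((β * ρ) ^ 2 * 𝔼 J, ‖X J x‖ ^ 2)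
          + γ / 2 * (β * γ) * v := by
        simp only [Finset.expect_add_distrib, Fintype.expect_const, ← Finset.mul_expect]
    _ ≤ f x - γ / 2 * ‖G x‖ ^ 2 + γ / 2 * ((β * ρ) ^ 2 * (‖G x‖ ^ 2 + v))
          + γ / 2 * (β * γ) * v := by
        gcongr
        exact hX.expect_norm_sq_le x
    _ = _ := by ring

variable {Lstar : ℝ} {T : ℕ} {γ ρ : ℝ} {w0 : E} {W : (Fin T → Ω × Ω) → ℕ → E}

theorem nsam_expect_sum_norm_sq_le (hf : ∀ x, HasGradientAt f (G x) x) (hG : LipschitzWith β G)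
    (hX : IsUnbiasedOracle X G v) (hLstar : ∀ x, Lstar ≤ f x) (hγ : 0 ≤ γ) (hβγ : β * γ ≤ 1)
    (hW : IsDrivenRecursion (nsamStep X γ ρ) w0 W) :
    γ / 2 * (1 - (β * ρ) ^ 2) * 𝔼 S, ∑ t ∈ Finset.range T, ‖G (W S t)‖ ^ 2 ≤
      f w0 - Lstar + T * (γ / 2 * ((β * ρ) ^ 2 + β * γ) * v) := by
  set c := γ / 2 * (1 - (β * ρ) ^ 2)
  set e := γ / 2 * ((β * ρ) ^ 2 + β * γ) * v
  have hdrift : ∀ x, 𝔼 B, f (nsamStep X γ ρ B x) ≤ f x - (c * ‖G x‖ ^ 2 - e) := fun x =>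
    (expect_comp_nsamStep_le hX hf hG hγ hβγ ρ x).trans_eq (by ring)
  have htelescoped := hW.expect_add_expect_sum_le hdrift le_rfl
  simp only [Finset.sum_sub_distrib, ← Finset.mul_sum, Finset.sum_const, Finset.card_range,
    nsmul_eq_mul, Finset.expect_sub_distrib, ← Finset.mul_expect, Fintype.expect_const]
    at htelescoped
  have hlower : Lstar ≤ 𝔼 S, f (W S T) :=
    Finset.le_expect Finset.univ_nonempty fun S _ => hLstar (W S T)
  linarith

theorem nsam_stochastic_convergence_general (hf : ∀ x, HasGradientAt f (G x) x) (hβ : 0 < β)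
    (hG : LipschitzWith β G) (hX : IsUnbiasedOracle X G v) (hLstar : ∀ x, Lstar ≤ f x)
    (hT : 4 ≤ T) (hγ : γ = 1 / (√T * β)) (hρ : ρ = 1 / ((T : ℝ) ^ ((1 : ℝ) / 4) * β))
    (hW : IsDrivenRecursion (nsamStep X γ ρ) w0 W) :
    1 / (T : ℝ) * 𝔼 S, ∑ t ∈ Finset.range T, ‖G (W S t)‖ ^ 2 ≤
      4 * β / √T * (f w0 - Lstar) + 4 * v / √T := by
  have hT0 : (0 : ℝ) < T := by positivity
  have hr2 : 2 ≤ √(T : ℝ) := Real.le_sqrt_of_sq_le (by norm_num; exact_mod_cast hT)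
  have hr : 1 / √(T : ℝ) ≤ 1 / 2 := one_div_le_one_div_of_le two_pos hr2
  have hγ0 : 0 < γ := by rw [hγ]; positivity
  have hβγ : β * γ = 1 / √T := by rw [hγ]; field_simp
  have hβρ : (β * ρ) ^ 2 = 1 / √T := by
    rw [← rpow_one_div_four_sq hT0.le, hρ]
    field_simp
  have hsum := nsam_expect_sum_norm_sq_le hf hG hX hLstar hγ0.le (by linarith) hW
  rw [hβγ, hβρ] at hsum
  set P := 𝔼 S, ∑ t ∈ Finset.range T, ‖G (W S t)‖ ^ 2
  have hquarter : γ / 4 * P ≤ f w0 - Lstar + T * (γ * (1 / √T) * v) :=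
    calc γ / 4 * P = γ / 2 * (1 - 1 / 2) * P := by ring
      _ ≤ γ / 2 * (1 - 1 / √T) * P := by gcongr
      _ ≤ f w0 - Lstar + T * (γ / 2 * (1 / √T + 1 / √T) * v) := hsum
      _ = f w0 - Lstar + T * (γ * (1 / √T) * v) := by ring
  have hγT : 1 / (γ * T) = β / √T := by
    rw [hγ]
    field_simp
    exact Real.sq_sqrt hT0.le
  calc 1 / (T : ℝ) * P = 4 / (γ * T) * (γ / 4 * P) := by field_simp
    _ ≤ 4 / (γ * T) * (f w0 - Lstar + T * (γ * (1 / √T) * v)) := by gcongr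
    _ = 4 * (1 / (γ * T)) * (f w0 - Lstar) + 4 * v / √T := by field_simp
    _ = 4 * β / √T * (f w0 - Lstar) + 4 * v / √T := by
        rw [hγT, ← mul_div_assoc]

end Smooth

section EmpiricalRisk

variable {d n : ℕ} {g : Fin n → EuclideanSpace ℝ (Fin d) → EuclideanSpace ℝ (Fin d)}

theorem fullGrad_eq_expect (x : EuclideanSpace ℝ (Fin d)) : fullGrad g x = 𝔼 i, g i x := by
  rw [← inv_card_smul_sum_eq_expect, Fintype.card_fin, fullGrad]

theorem batchGrad_eq_expect {b : ℕ} (J : Fin b → Fin n) (x : EuclideanSpace ℝ (Fin d)) :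
    batchGrad g J x = 𝔼 k, g (J k) x := by
  rw [← inv_card_smul_sum_eq_expect, Fintype.card_fin, batchGrad]

theorem hasGradientAt_fullLoss {ℓ : Fin n → EuclideanSpace ℝ (Fin d) → ℝ}
    {x : EuclideanSpace ℝ (Fin d)} (hg : ∀ i, HasGradientAt (ℓ i) (g i x) x) :
    HasGradientAt (fullLoss ℓ) (fullGrad g x) x := by
  have hsum := (HasFDerivAt.fun_sum (u := Finset.univ)
    fun i _ => (hg i).hasFDerivAt).const_mul (n : ℝ)⁻¹
  rw [hasGradientAt_iff_hasFDerivAt, fullGrad, map_smul, map_sum]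
  exact hsum

theorem isUnbiasedOracle_batchGrad {b : ℕ} (hn : 0 < n) (hb : 1 ≤ b) {v : ℝ}
    (hvar : ∀ x, (n : ℝ)⁻¹ * ∑ i, ‖g i x - fullGrad g x‖ ^ 2 ≤ v) :
    IsUnbiasedOracle (batchGrad (b := b) g) (fullGrad g) (v / b) := by
  have : Nonempty (Fin n) := ⟨⟨0, hn⟩⟩
  have : Nonempty (Fin b) := ⟨⟨0, hb⟩⟩
  have hsingle : IsUnbiasedOracle g (fullGrad g) v :=
    { expect_eq := fun x => (fullGrad_eq_expect x).symm
      expect_norm_sub_sq_le := fun x => by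
        simpa only [← inv_card_smul_sum_eq_expect, Fintype.card_fin, smul_eq_mul] using hvar x }
  simpa only [← batchGrad_eq_expect, Fintype.card_fin] using hsingle.minibatch (κ := Fin b)

end EmpiricalRisk

/-- Convergence of stochastic n-SAM: under (A1), `β`-Lipschitzness of
`∇L` (`β > 0`), boundedness below of `L` with infimum `L*`, horizon `T ≥ 16`, and step sizes
`γ = 1/(√T·β)`, `ρ = 1/(T^{1/4}·β)`, iterating
`w_{t+1} = w_t − γ∇L_{I_t}(w_t + ρ∇L_{J_t}(w_t))` from `w_0` and averaging uniformly over all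
batch-pair sequences,
`(1/T)·E[∑_{t<T} ‖∇L(w_t)‖²] ≤ (4β/√T)(L(w_0) − L*) + 8σ²/(b√T)`. -/
theorem nsam_stochastic_convergence {d n b : ℕ} (hn : 0 < n) (hb : 1 ≤ b)
    (ℓ : Fin n → EuclideanSpace ℝ (Fin d) → ℝ)
    (g : Fin n → EuclideanSpace ℝ (Fin d) → EuclideanSpace ℝ (Fin d))
    (hg : ∀ i x, HasGradientAt (ℓ i) (g i x) x)
    (β : ℝ) (hβ : 0 < β) (hLip : LipschitzWith β.toNNReal (fullGrad g))
    (σ : ℝ) (hσ : 0 ≤ σ)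
    (hvar : ∀ x, (n : ℝ)⁻¹ * ∑ i, ‖g i x - fullGrad g x‖ ^ 2 ≤ σ ^ 2)
    (Lstar : ℝ) (hinf : IsGLB (Set.range (fullLoss ℓ)) Lstar)
    (T : ℕ) (hT : 16 ≤ T)
    (γ ρ : ℝ) (hγ : γ = 1 / (Real.sqrt T * β)) (hρ : ρ = 1 / ((T : ℝ) ^ ((1 : ℝ) / 4) * β))
    (w0 : EuclideanSpace ℝ (Fin d))
    (W : (Fin T → ((Fin b → Fin n) × (Fin b → Fin n))) → ℕ → EuclideanSpace ℝ (Fin d))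
    (hW0 : ∀ S, W S 0 = w0)
    (hWrec : ∀ S, ∀ t : Fin T,
      W S ((t : ℕ) + 1) =
        W S (t : ℕ) - γ • batchGrad g (S t).1 (W S (t : ℕ) + ρ • batchGrad g (S t).2 (W S (t : ℕ)))) :
    (1 / (T : ℝ)) *
        ((Fintype.card (Fin T → ((Fin b → Fin n) × (Fin b → Fin n))) : ℝ)⁻¹ *
          ∑ S : Fin T → ((Fin b → Fin n) × (Fin b → Fin n)),
            ∑ t ∈ Finset.range T, ‖fullGrad g (W S t)‖ ^ 2) ≤
      4 * β / Real.sqrt T * (fullLoss ℓ w0 - Lstar) + 8 * σ ^ 2 / (b * Real.sqrt T) := by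
  have : Nonempty (Fin n) := ⟨⟨0, hn⟩⟩
  lift β to ℝ≥0 using hβ.le
  rw [Real.toNNReal_coe] at hLip
  have hbound := nsam_stochastic_convergence_general (fun x => hasGradientAt_fullLoss (hg · x))
    hβ hLip (isUnbiasedOracle_batchGrad hn hb hvar) (fun x => hinf.1 ⟨x, rfl⟩)
    (le_trans (by norm_num) hT) hγ hρ ⟨hW0, hWrec⟩
  rw [← smul_eq_mul (Fintype.card _ : ℝ)⁻¹, inv_card_smul_sum_eq_expect, ← div_div,
    mul_div_assoc 8]
  refine hbound.trans ?_
  gcongr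
  norm_num
end
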